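/- Let E(w) = max(w,0) on ℝ, let τ > 0, and let (u^k)_{k≥−1} be the BDF2 discrete solution with initial data u^{−1} = 1 + τ and u^0 = 1, i.e. for k ≥ 1, u^k is the unique minimizer over ℝ of w ↦ (1/τ)·(w − u^{k−1})² − (1/(4τ))·(w − u^{k−2})² + E(w). Let N ≥ 1 be the smallest index with Nτ ≥ 1, and assume additionally that 1 − Nτ ∈ [−(2/3)τ, 0]. Then u^N = 0, u^{N−1} = 1 − (N−1)τ ∈ [τ/3, τ], and for every k > N: u^k = −(1/2)·(1 − 3^{−(k−N)})·u^{N−1}, so in particular u^k ≤ −(1/6)·(1 − 3^{−(k−N)})·τ < 0. Consequently the BDF2 approximation has an error of at least order τ at times beyond t = 1, excluding second order convergence in general. -/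

import Mathlib

/-!
A BDF2 step is characterised by the inclusion `4b - a - 3v ∈ 2τ ∂E(v)`, where `a` and `b` are the
two preceding values. For `E(w) = max(w,0)` the step therefore depends on `4b - a` only: it is a
one-sided soft threshold, with value `0` in the dead zone `0 ≤ 4b - a ≤ 2τ`. Above the dead zone
the solution decreases with slope `-1`, exactly as the gradient flow does, and the assumption on
`1 - Nτ` says that step `N` falls into the dead zone. Afterwards the subgradient vanishes and the
scheme becomes the linear recursion `3v = 4b - a` with characteristic roots `1` and `1/3`. The
memory of the last positive value `u^{N-1}` survives in it, and the solution drifts away to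
`-u^{N-1}/2`.
-/

open scoped RealInnerProductSpace

section Hilbert

variable {H : Type*} [NormedAddCommGroup H] [InnerProductSpace ℝ H]

/-- The functional minimized in one BDF2 step of size `τ` for the potential `E`. The arguments
`a` and `b` are the approximations two steps and one step back. -/
noncomputable def bdf2Functional (τ : ℝ) (E : H → ℝ) (a b w : H) : ℝ :=
  (1 / τ) * ‖w - b‖ ^ 2 - (1 / (4 * τ)) * ‖w - a‖ ^ 2 + E w

/-- Discrete BDF2 solutions for the potential `E`. The index is shifted by one, so that `u k`
is the approximation `u^{k-1}` and the initial data `u^{-1}`, `u^0` are `u 0`, `u 1`. -/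
def IsBDF2Solution (τ : ℝ) (E : H → ℝ) (u : ℕ → H) : Prop :=
  ∀ k w, bdf2Functional τ E (u k) (u (k + 1)) (u (k + 2)) ≤
    bdf2Functional τ E (u k) (u (k + 1)) w

theorem bdf2Functional_add_norm_sq_le {τ : ℝ} {E : H → ℝ} {a b p s w : H} (hτ : τ ≠ 0)
    (hs : E p + ⟪s, w - p⟫ ≤ E w) (hp : (2 * τ) • s = (4 : ℝ) • b - a - (3 : ℝ) • p) :
    bdf2Functional τ E a b p + 3 / (4 * τ) * ‖w - p‖ ^ 2 ≤ bdf2Functional τ E a b w := by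
  have expand (c : H) :
      ‖w - c‖ ^ 2 = ‖w - p‖ ^ 2 + 2 * ⟪p - c, w - p⟫ + ‖p - c‖ ^ 2 := by
    rw [← sub_add_sub_cancel w p c, norm_add_sq_real, real_inner_comm]
  have euler_lagrange : 4 * ⟪p - b, w - p⟫ - ⟪p - a, w - p⟫ = -(2 * τ) * ⟪s, w - p⟫ := by
    have hgrad : (4 : ℝ) • (p - b) - (p - a) = -(2 * τ) • s := by
      rw [neg_smul, hp]
      module
    simpa only [inner_sub_left, real_inner_smul_left] using congrArg (⟪·, w - p⟫) hgrad
  have first_order :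
      2 / τ * ⟪p - b, w - p⟫ - 1 / (2 * τ) * ⟪p - a, w - p⟫ = -⟪s, w - p⟫ := by
    field_simp
    linear_combination euler_lagrange
  have hdiff : bdf2Functional τ E a b w - bdf2Functional τ E a b p =
      3 / (4 * τ) * ‖w - p‖ ^ 2 + (E w - E p - ⟪s, w - p⟫) := by
    rw [bdf2Functional, bdf2Functional, expand a, expand b]
    linear_combination first_order
  linarith

theorem IsBDF2Solution.eq_of_subgradient {τ : ℝ} {E : H → ℝ} {u : ℕ → H}
    (hu : IsBDF2Solution τ E u) (hτ : 0 < τ) {k : ℕ} {p s : H}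
    (hs : ∀ w, E p + ⟪s, w - p⟫ ≤ E w)
    (hp : (2 * τ) • s = (4 : ℝ) • u (k + 1) - u k - (3 : ℝ) • p) :
    u (k + 2) = p := by
  have hgap := bdf2Functional_add_norm_sq_le hτ.ne' (hs (u (k + 2))) hp
  have hsq : ‖u (k + 2) - p‖ ^ 2 ≤ 0 :=
    nonpos_of_mul_nonpos_right (by linarith [hu k p]) (show 0 < 3 / (4 * τ) by positivity)
  exact sub_eq_zero.mp (norm_eq_zero.mp (sq_nonpos_iff _ |>.mp hsq))

end Hilbert

theorem max_zero_add_mul_sub_le {s p : ℝ} (hs : s ∈ Set.Icc 0 1) (hsp : s * p = max p 0) (w : ℝ) :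
    max p 0 + s * (w - p) ≤ max w 0 := by
  have hsw : s * w ≤ max w 0 :=
    calc s * w ≤ s * max w 0 := mul_le_mul_of_nonneg_left (le_max_left w 0) hs.1
      _ ≤ max w 0 := mul_le_of_le_one_left (le_max_right w 0) hs.2
  linarith

namespace IsBDF2Solution

variable {τ : ℝ} {u : ℕ → ℝ}

theorem max_zero_step_eq_of_mul_eq_max (hu : IsBDF2Solution τ (max · 0) u) (hτ : 0 < τ)
    {k : ℕ} {p s : ℝ} (hs : s ∈ Set.Icc 0 1) (hsp : s * p = max p 0)
    (hp : 2 * τ * s = 4 * u (k + 1) - u k - 3 * p) : u (k + 2) = p :=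
  hu.eq_of_subgradient (s := s) hτ
    (fun w => by simpa [mul_comm] using max_zero_add_mul_sub_le hs hsp w) hp

theorem max_zero_step_eq_of_two_mul_le (hu : IsBDF2Solution τ (max · 0) u) (hτ : 0 < τ) {k : ℕ}
    (h : 2 * τ ≤ 4 * u (k + 1) - u k) : u (k + 2) = (4 * u (k + 1) - u k - 2 * τ) / 3 := by
  refine hu.max_zero_step_eq_of_mul_eq_max hτ (s := 1) ⟨zero_le_one, le_rfl⟩ ?_ (by ring)
  rw [one_mul, max_eq_left (by linarith)]

theorem max_zero_step_eq_zero (hu : IsBDF2Solution τ (max · 0) u) (hτ : 0 < τ) {k : ℕ}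
    (h : 4 * u (k + 1) - u k ∈ Set.Icc 0 (2 * τ)) : u (k + 2) = 0 := by
  have h2τ : 0 < 2 * τ := by positivity
  refine hu.max_zero_step_eq_of_mul_eq_max hτ (s := (4 * u (k + 1) - u k) / (2 * τ))
    ⟨div_nonneg h.1 h2τ.le, (div_le_one h2τ).mpr h.2⟩ (by simp) ?_
  rw [mul_div_cancel₀ _ h2τ.ne', mul_zero, sub_zero]

theorem max_zero_step_eq_of_nonpos (hu : IsBDF2Solution τ (max · 0) u) (hτ : 0 < τ) {k : ℕ}
    (h : 4 * u (k + 1) - u k ≤ 0) : u (k + 2) = (4 * u (k + 1) - u k) / 3 := by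
  refine hu.max_zero_step_eq_of_mul_eq_max hτ (s := 0) ⟨le_rfl, zero_le_one⟩ ?_ (by ring)
  rw [zero_mul, max_eq_right (by linarith)]

theorem max_zero_eq_sub_mul (hu : IsBDF2Solution τ (max · 0) u) (hτ : 0 < τ) {x : ℝ}
    (h0 : u 0 = x + τ) (h1 : u 1 = x) (n : ℕ) (hn : (n - 1) * τ ≤ x) :
    u n = x - (n - 1) * τ := by
  induction n using Nat.twoStepInduction with
  | zero => rw [h0]; push_cast; ring
  | one => rw [h1]; push_cast; ring
  | more n ih ih' =>
    push_cast at hn ih' ⊢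
    have ha : u n = x - (n - 1) * τ := ih (by linarith)
    have hb : u (n + 1) = x - n * τ := by simpa using ih' (by linarith)
    rw [hu.max_zero_step_eq_of_two_mul_le hτ (by linarith), ha, hb]
    ring

theorem max_zero_eq_neg_half_mul (hu : IsBDF2Solution τ (max · 0) u) (hτ : 0 < τ) {k : ℕ}
    (hk : 0 ≤ u k) (hk' : u (k + 1) = 0) (j : ℕ) :
    u (k + 1 + j) = -(1 / 2) * (1 - (1 / 3 : ℝ) ^ j) * u k := by
  induction j using Nat.twoStepInduction with
  | zero => simpa using hk'
  | one =>
    rw [hu.max_zero_step_eq_of_nonpos hτ (by linarith), hk']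
    ring
  | more j ih ih' =>
    have recursion : 4 * u (k + 1 + j + 1) - u (k + 1 + j) =
        3 * (-(1 / 2) * (1 - (1 / 3 : ℝ) ^ (j + 2)) * u k) := by
      rw [ih, show k + 1 + j + 1 = k + 1 + (j + 1) from rfl, ih']
      ring
    have hpow : (1 / 3 : ℝ) ^ (j + 2) ≤ 1 := pow_le_one₀ (by norm_num) (by norm_num)
    have hnonneg : 0 ≤ (1 - (1 / 3 : ℝ) ^ (j + 2)) * u k := mul_nonneg (sub_nonneg.mpr hpow) hk
    rw [← add_assoc, hu.max_zero_step_eq_of_nonpos hτ (by linarith), recursion]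
    ring

end IsBDF2Solution

/-- for the BDF2 scheme on `ℝ` with potential `E(w) = max(w,0)` and initial
data `u^{−1} = 1 + τ`, `u^0 = 1` (index shift: `u k = u^{k−1}`), if `N` is the smallest
index with `Nτ ≥ 1` and in addition `1 − Nτ ∈ [−(2/3)τ, 0]`, then `u^N = 0`,
`u^{N−1} = 1 − (N−1)τ ∈ [τ/3, τ]`, and for all `k > N` one has
`u^k = −(1/2)(1 − 3^{−(k−N)})·u^{N−1}`, hence `u^k ≤ −(1/6)(1 − 3^{−(k−N)})τ < 0`:
the approximation has a residual of order `τ` beyond `t = 1`. -/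
theorem bdf2_obstacle_first_order_residual (τ : ℝ) (hτ : 0 < τ) (u : ℕ → ℝ)
    (h0 : u 0 = 1 + τ) (h1 : u 1 = 1)
    (hmin : ∀ k : ℕ, ∀ w : ℝ,
      (1 / τ) * (u (k + 2) - u (k + 1)) ^ 2 - (1 / (4 * τ)) * (u (k + 2) - u k) ^ 2
          + max (u (k + 2)) 0
        ≤ (1 / τ) * (w - u (k + 1)) ^ 2 - (1 / (4 * τ)) * (w - u k) ^ 2 + max w 0)
    (N : ℕ) (hN1 : 1 ≤ N) (hNτ : 1 ≤ (N : ℝ) * τ)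
    (hNmin : ∀ m : ℕ, m < N → (m : ℝ) * τ < 1)
    (hextra : 1 - (N : ℝ) * τ ∈ Set.Icc (-(2 / 3) * τ) 0) :
    u (N + 1) = 0
    ∧ u N = 1 - ((N : ℝ) - 1) * τ
    ∧ u N ∈ Set.Icc (τ / 3) τ
    ∧ ∀ k : ℕ, N < k →
        u (k + 1) = -(1 / 2) * (1 - (1 / 3 : ℝ) ^ (k - N)) * u N
        ∧ u (k + 1) ≤ -(1 / 6) * (1 - (1 / 3 : ℝ) ^ (k - N)) * τ
        ∧ u (k + 1) < 0 := by
  have hu : IsBDF2Solution τ (max · 0) u := by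
    simpa only [IsBDF2Solution, bdf2Functional, Real.norm_eq_abs, sq_abs] using hmin
  obtain ⟨M, rfl⟩ : ∃ M, N = M + 1 := ⟨N - 1, by omega⟩
  have hM : (M : ℝ) * τ < 1 := hNmin M M.lt_succ_self
  obtain ⟨hlow, hup⟩ := hextra
  push_cast at hlow hup ⊢
  have hprev : u M = 1 - (M - 1) * τ := hu.max_zero_eq_sub_mul hτ h0 h1 M (by linarith)
  have hlast : u (M + 1) = 1 - M * τ := by
    simpa using hu.max_zero_eq_sub_mul hτ h0 h1 (M + 1) (by push_cast; linarith)
  have hmem : u (M + 1) ∈ Set.Icc (τ / 3) τ := ⟨by linarith, by linarith⟩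
  have hzero : u (M + 2) = 0 := hu.max_zero_step_eq_zero hτ ⟨by linarith, by linarith⟩
  refine ⟨hzero, by linarith, hmem, fun k hk => ?_⟩
  have hpow : 0 < 1 - (1 / 3 : ℝ) ^ (k - (M + 1)) :=
    sub_pos.mpr (pow_lt_one₀ (by norm_num) (by norm_num) (Nat.sub_ne_zero_of_lt hk))
  have htail := hu.max_zero_eq_neg_half_mul hτ (by linarith [hmem.1]) hzero (k - (M + 1))
  rw [show M + 1 + 1 + (k - (M + 1)) = k + 1 by omega] at htail
  have hdrift := mul_le_mul_of_nonneg_left hmem.1 hpow.le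
  exact ⟨htail, by linarith, by linarith [mul_pos hpow hτ]⟩
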